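/- arXiv:0801.1742 — 2 statements merged into one kernel-verified Lean document; each statement's English description precedes it below -/
import Mathlib

section
/- For the 4n-parametric family of Lie brackets on ℝ^{4n}, the scalar curvature τ = Σ_{i=1}^{4n} ε_i ρ(X_i,X_i), where ρ(y,z) = Σ_{i=1}^{4n} ε_i R(X_i,y,z,X_i), R(x,y,z,u) = −¼ g([x,y],[z,u]) and ε_i = g(X_i,X_i), equals τ = −(3/2) Σ_{α=1}^{n} (λ_{4α−3}² + λ_{4α−2}² − λ_{4α−1}² − λ_{4α}²). -/
noncomputable section

/-- The signature of the basis vectors inside each block: `(+, +, -, -)`. -/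
def sgn : Fin 4 → ℝ := ![1, 1, -1, -1]

/-- Structure constants of the bracket inside one block, depending on the four
parameters `l 0 = λ_1̄`, `l 1 = λ_2̄`, `l 2 = λ_3̄`, `l 3 = λ_4̄`:
`sc l r s` is the coordinate vector of `[X_r, X_s]`. -/
def sc (l : Fin 4 → ℝ) : Fin 4 → Fin 4 → Fin 4 → ℝ :=
  ![![![0, 0, 0, 0], ![0, 0, l 1, -l 0], ![0, l 1, 0, l 3], ![0, -l 0, -l 3, 0]],
    ![![0, 0, -l 1, l 0], ![0, 0, 0, 0], ![-l 1, 0, 0, -l 2], ![l 0, 0, l 2, 0]],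
    ![![0, -l 1, 0, -l 3], ![l 1, 0, 0, l 2], ![0, 0, 0, 0], ![-l 3, l 2, 0, 0]],
    ![![0, l 0, l 3, 0], ![-l 0, 0, -l 2, 0], ![l 3, -l 2, 0, 0], ![0, 0, 0, 0]]]

/-- `V n = ℝ^{4n}`, with coordinates indexed by a block `α : Fin n` and an
offset `r : Fin 4` (offset `r` corresponds to the basis vector `X_{4α+r+1}`,
i.e. `r = 0,1,2,3` correspond to `1̄,2̄,3̄,4̄`). -/
abbrev V (n : ℕ) : Type := Fin n × Fin 4 → ℝ

/-- The `4n`-parametric family of brackets on `ℝ^{4n}`: bilinear, vanishing on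
pairs of basis vectors from different blocks, and given inside each block `α`
by the structure constants `sc` with parameters `λ_{4α+1},…,λ_{4α+4}`. -/
def brk {n : ℕ} (lam : Fin n × Fin 4 → ℝ) (x y : V n) : V n := fun p =>
  ∑ r : Fin 4, ∑ s : Fin 4,
    x (p.1, r) * y (p.1, s) * sc (fun t => lam (p.1, t)) r s p.2

/-- The standard basis vectors `X_i` of `ℝ^{4n}`. -/
def X {n : ℕ} (i : Fin n × Fin 4) : V n := fun j => if j = i then 1 else 0

/-- The Norden metric `g`: the standard basis is orthogonal with
`g(X_1̄,X_1̄) = g(X_2̄,X_2̄) = 1`, `g(X_3̄,X_3̄) = g(X_4̄,X_4̄) = -1` in each block. -/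
def gf {n : ℕ} (x y : V n) : ℝ := ∑ p : Fin n × Fin 4, sgn p.2 * x p * y p

/-- The almost complex structure `J`: `J X_1̄ = X_3̄`, `J X_2̄ = X_4̄`,
`J X_3̄ = -X_1̄`, `J X_4̄ = -X_2̄` in each block. -/
def Jm {n : ℕ} (x : V n) : V n := fun p =>
  ![-x (p.1, 2), -x (p.1, 3), x (p.1, 0), x (p.1, 1)] p.2

/-- The curvature tensor `R(x,y,z,u) = −¼ g([x,y],[z,u])`. -/
def Rc {n : ℕ} (lam : Fin n × Fin 4 → ℝ) (x y z u : V n) : ℝ :=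
  -(1 / 4) * gf (brk lam x y) (brk lam z u)

/-- The Ricci tensor `ρ(y,z) = Σ_i ε_i R(X_i,y,z,X_i)` with `ε_i = g(X_i,X_i)`. -/
def ric {n : ℕ} (lam : Fin n × Fin 4 → ℝ) (y z : V n) : ℝ :=
  ∑ i : Fin n × Fin 4, sgn i.2 * Rc lam (X i) y z (X i)

theorem brk_X {n : ℕ} (lam : Fin n × Fin 4 → ℝ) (a b c : Fin n) (i j k : Fin 4) :
    brk lam (X (a, i)) (X (b, j)) (c, k) =
      if c = a then (if c = b then sc (fun t => lam (c, t)) i j k else 0) else 0 := by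
  unfold brk X
  by_cases h1 : c = a <;> by_cases h2 : c = b <;>
    simp [h1, h2, Prod.ext_iff, ite_and]

theorem gf_X {n : ℕ} (lam : Fin n × Fin 4 → ℝ) (a b : Fin n) (i j : Fin 4) :
    gf (brk lam (X (a, i)) (X (b, j))) (brk lam (X (b, j)) (X (a, i))) =
      if a = b then ∑ k, sgn k * sc (fun t => lam (a, t)) i j k * sc (fun t => lam (a, t)) j i k
      else 0 := by
  unfold gf
  rw [Fintype.sum_prod_type, Finset.sum_eq_single a]
  · by_cases h : a = b
    · subst h
      simp [brk_X]
    · simp [brk_X, h]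
  · intro c _ hc
    simp [brk_X, hc]
  · simp

theorem block_sum (l : Fin 4 → ℝ) :
    ∑ j, sgn j * ∑ i, sgn i * (-(1 / 4) * ∑ k, sgn k * sc l i j k * sc l j i k) =
      -(3 / 2) * (l 0 ^ 2 + l 1 ^ 2 - l 2 ^ 2 - l 3 ^ 2) := by
  simp [Fin.sum_univ_four, sgn, sc]
  ring

/-- the scalar curvature `τ = Σ_i ε_i ρ(X_i,X_i)` equals
`−(3/2) Σ_α (λ_{4α−3}² + λ_{4α−2}² − λ_{4α−1}² − λ_{4α}²)`. -/
theorem scalar_curvature {n : ℕ} (hn : 1 ≤ n) (lam : Fin n × Fin 4 → ℝ) :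
    ∑ i : Fin n × Fin 4, sgn i.2 * ric lam (X i) (X i) =
      -(3 / 2) * ∑ α : Fin n,
        (lam (α, 0) ^ 2 + lam (α, 1) ^ 2 - lam (α, 2) ^ 2 - lam (α, 3) ^ 2) := by
  rw [Fintype.sum_prod_type, Finset.mul_sum]
  refine Finset.sum_congr rfl fun b _ => ?_
  rw [← block_sum (fun t => lam (b, t))]
  refine Finset.sum_congr rfl fun j _ => ?_
  congr 1
  unfold ric Rc
  rw [Fintype.sum_prod_type, Finset.sum_eq_single b]
  · refine Finset.sum_congr rfl fun i _ => ?_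
    rw [gf_X, if_pos rfl]
  · intro a _ ha
    simp [gf_X, ha]
  · simp
end
end

section
/- For the 4n-parametric family of Lie brackets on ℝ^{4n} and a fixed α (writing 1̄=4α−3, 2̄=4α−2, 3̄=4α−1, 4̄=4α), the sectional curvatures of the two basic holomorphic 2-planes coincide, k(X_1̄,X_3̄) = k(X_2̄,X_4̄), if and only if λ_1̄² + λ_4̄² = λ_2̄² + λ_3̄² (the condition for constant holomorphic sectional curvatures). -/
noncomputable section

/-- The sectional curvature `k(x,y) = R(x,y,y,x)/(g(x,x)g(y,y) − g(x,y)²)`. -/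
def sect {n : ℕ} (lam : Fin n × Fin 4 → ℝ) (x y : V n) : ℝ :=
  Rc lam x y y x / (gf x x * gf y y - gf x y ^ 2)

theorem gf_block {n : ℕ} (α : Fin n) (x y : V n) (hx : ∀ β r, β ≠ α → x (β, r) = 0) :
    gf x y = x (α, 0) * y (α, 0) + x (α, 1) * y (α, 1) - x (α, 2) * y (α, 2)
      - x (α, 3) * y (α, 3) := by
  unfold gf
  rw [Fintype.sum_prod_type, Finset.sum_eq_single α]
  · simp [Fin.sum_univ_four, sgn]
    ring
  · intro β _ hb
    simp [hx β _ hb]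
  · simp

theorem X_block {n : ℕ} (α : Fin n) (r : Fin 4) (β : Fin n) (s : Fin 4) (h : β ≠ α) :
    (X (α, r) : V n) (β, s) = 0 := by
  simp [X, h]

theorem brk_block {n : ℕ} (lam : Fin n × Fin 4 → ℝ) (α : Fin n) (r : Fin 4) (y : V n)
    (β : Fin n) (s : Fin 4) (h : β ≠ α) :
    brk lam (X (α, r)) y (β, s) = 0 := by
  simp [brk, X_block α r β _ h]

theorem brk_X_s17 {n : ℕ} (lam : Fin n × Fin 4 → ℝ) (α : Fin n) (r s t : Fin 4) :
    brk lam (X (α, r)) (X (α, s)) (α, t) = sc (fun t => lam (α, t)) r s t := by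
  simp [brk, X]

/-- the sectional curvatures of the two basic holomorphic
2-planes `span{X_1̄,X_3̄}` and `span{X_2̄,X_4̄}` coincide if and only if
`λ_1̄² + λ_4̄² = λ_2̄² + λ_3̄²` (the condition for constant holomorphic
sectional curvatures). -/
theorem holomorphic_sectional_condition {n : ℕ} (hn : 1 ≤ n)
    (lam : Fin n × Fin 4 → ℝ) :
    ∀ α : Fin n,
      sect lam (X (α, 0)) (X (α, 2)) = sect lam (X (α, 1)) (X (α, 3)) ↔
        lam (α, 0) ^ 2 + lam (α, 3) ^ 2 = lam (α, 1) ^ 2 + lam (α, 2) ^ 2 := by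
  intro α
  simp only [sect, Rc]
  rw [gf_block α (brk lam (X (α, 0)) (X (α, 2))) _ (fun β s h => brk_block lam α _ _ β s h),
    gf_block α (brk lam (X (α, 1)) (X (α, 3))) _ (fun β s h => brk_block lam α _ _ β s h),
    gf_block α (X (α, 0)) _ (X_block α _), gf_block α (X (α, 0)) _ (X_block α _),
    gf_block α (X (α, 1)) _ (X_block α _), gf_block α (X (α, 1)) _ (X_block α _),
    gf_block α (X (α, 2)) _ (X_block α _), gf_block α (X (α, 3)) _ (X_block α _)]
  simp only [brk_X_s17]
  simp [X, sc]
  constructor <;> intro h <;> linarith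
end
end
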